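/- (Compact embedding) Let m ∈ [1,4). Every sequence (uₙ) of functions in C_c^∞(Ω) that is bounded in the 𝓗¹-norm (i.e. sup_n ‖uₙ‖_{𝓗¹} < ∞) possesses a subsequence that converges in L^m(Ω); equivalently, the space 𝓗₀¹(Ω) is compactly embedded in L^m(Ω) for every m ∈ [1,4). -/

import Mathlib

open MeasureTheory Set Filter

noncomputable section

/-- The open unit square `Ω = (0,1) × (0,1)` in `ℝ²`. -/
def Omega : Set (ℝ × ℝ) := Ioo (0:ℝ) 1 ×ˢ Ioo (0:ℝ) 1

/-- Test functions on a set `s`: smooth with compact support contained in `s`. -/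
def IsTestOn (s : Set (ℝ × ℝ)) (φ : ℝ × ℝ → ℝ) : Prop :=
  ContDiff ℝ (⊤ : ℕ∞) φ ∧ HasCompactSupport φ ∧ tsupport φ ⊆ s

/-- Classical partial derivative in the `x`-direction. -/
def pdx (φ : ℝ × ℝ → ℝ) (p : ℝ × ℝ) : ℝ := fderiv ℝ φ p (1, 0)

/-- Classical partial derivative in the `y`-direction. -/
def pdy (φ : ℝ × ℝ → ℝ) (p : ℝ × ℝ) : ℝ := fderiv ℝ φ p (0, 1)

/-- `g` is a weak `x`-partial derivative of `u` on `s`. -/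
def HasWeakDerivXOn (s : Set (ℝ × ℝ)) (u g : ℝ × ℝ → ℝ) : Prop :=
  LocallyIntegrableOn u s volume ∧ LocallyIntegrableOn g s volume ∧
  ∀ φ : ℝ × ℝ → ℝ, IsTestOn s φ →
    ∫ p in s, u p * pdx φ p = - ∫ p in s, g p * φ p

/-- `g` is a weak `y`-partial derivative of `u` on `s`. -/
def HasWeakDerivYOn (s : Set (ℝ × ℝ)) (u g : ℝ × ℝ → ℝ) : Prop :=
  LocallyIntegrableOn u s volume ∧ LocallyIntegrableOn g s volume ∧
  ∀ φ : ℝ × ℝ → ℝ, IsTestOn s φ →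
    ∫ p in s, u p * pdy φ p = - ∫ p in s, g p * φ p

/-- Test functions on `Ω`. -/
def IsTest (φ : ℝ × ℝ → ℝ) : Prop := IsTestOn Omega φ

/-- Membership in the weighted Sobolev space `𝓗¹(Ω)`, with weak derivatives `gx, gy`:
`u ∈ L²(Ω)`, `gx = ∂ₓu`, `gy = ∂_y u` weakly, and `y^α₁ gx, x^α₂ gy ∈ L²(Ω)`. -/
structure MemH1 (α₁ α₂ : ℝ) (u gx gy : ℝ × ℝ → ℝ) : Prop where
  memL2 : MemLp u 2 (volume.restrict Omega)
  weakX : HasWeakDerivXOn Omega u gx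
  weakY : HasWeakDerivYOn Omega u gy
  wgx : MemLp (fun p => p.2 ^ α₁ * gx p) 2 (volume.restrict Omega)
  wgy : MemLp (fun p => p.1 ^ α₂ * gy p) 2 (volume.restrict Omega)

/-- The `𝓗¹(Ω)` norm of `u` (with weak derivatives `gx, gy`). -/
def H1Norm (α₁ α₂ : ℝ) (u gx gy : ℝ × ℝ → ℝ) : ℝ :=
  Real.sqrt ((∫ p in Omega, (u p) ^ 2) +
    (∫ p in Omega, (p.2 ^ α₁ * gx p) ^ 2) +
    (∫ p in Omega, (p.1 ^ α₂ * gy p) ^ 2))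

/-- Membership in `𝓗₀¹(Ω)`: member of `𝓗¹(Ω)` approximable in the `𝓗¹` norm by
test functions. -/
def MemH10 (α₁ α₂ : ℝ) (u gx gy : ℝ × ℝ → ℝ) : Prop :=
  MemH1 α₁ α₂ u gx gy ∧
  ∀ ε : ℝ, 0 < ε → ∃ φ : ℝ × ℝ → ℝ, IsTest φ ∧
    H1Norm α₁ α₂ (fun p => u p - φ p) (fun p => gx p - pdx φ p)
      (fun p => gy p - pdy φ p) < ε

/-- Membership in `H₀(Ω) = {u ∈ 𝓗₀¹(Ω) : ∫_Ω V u² < ∞}`. -/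
def MemH0 (α₁ α₂ : ℝ) (V u gx gy : ℝ × ℝ → ℝ) : Prop :=
  MemH10 α₁ α₂ u gx gy ∧
  IntegrableOn (fun p => V p * (u p) ^ 2) Omega volume

/-- The bilinear form `a(u,v)` associated with the sub-elliptic operator with potential `V`. -/
def aForm (α₁ α₂ : ℝ) (V u gx gy v hx hy : ℝ × ℝ → ℝ) : ℝ :=
  ∫ p in Omega, ((p.2 ^ α₁ * gx p) * (p.2 ^ α₁ * hx p) +
    (p.1 ^ α₂ * gy p) * (p.1 ^ α₂ * hy p) + V p * u p * v p)

/-- The bilinear form `a₁(u,v)` (no potential). -/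
def a1Form (α₁ α₂ : ℝ) (u gx gy v hx hy : ℝ × ℝ → ℝ) : ℝ :=
  ∫ p in Omega, ((p.2 ^ α₁ * gx p) * (p.2 ^ α₁ * hx p) +
    (p.1 ^ α₂ * gy p) * (p.1 ^ α₂ * hy p))

/-- Membership in `S_p = {V ∈ L^p(Ω) : V ≥ 0 a.e., ‖V‖_{L^p(Ω)} ≤ M}`. -/
def MemSp (ppow M : ℝ) (V : ℝ × ℝ → ℝ) : Prop :=
  MemLp V (ENNReal.ofReal ppow) (volume.restrict Omega) ∧
  (∀ᵐ p ∂(volume.restrict Omega), 0 ≤ V p) ∧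
  eLpNorm V (ENNReal.ofReal ppow) (volume.restrict Omega) ≤ ENNReal.ofReal M

/-- `u` (with weak derivatives `gx, gy`) is an eigenfunction of the sub-elliptic operator
with potential `V` for the eigenvalue `lam`. -/
def IsEigenfun (α₁ α₂ : ℝ) (V : ℝ × ℝ → ℝ) (lam : ℝ) (u gx gy : ℝ × ℝ → ℝ) : Prop :=
  MemH0 α₁ α₂ V u gx gy ∧
  ∀ v hx hy : ℝ × ℝ → ℝ, MemH0 α₁ α₂ V v hx hy →
    aForm α₁ α₂ V u gx gy v hx hy = lam * ∫ p in Omega, u p * v p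

/-- The first eigenvalue `λ₁(V) = inf { a(u,u) : u ∈ H₀(Ω), ‖u‖_{L²} = 1 }`. -/
def lam1 (α₁ α₂ : ℝ) (V : ℝ × ℝ → ℝ) : ℝ :=
  sInf { r | ∃ u gx gy : ℝ × ℝ → ℝ, MemH0 α₁ α₂ V u gx gy ∧
    (∫ p in Omega, (u p) ^ 2) = 1 ∧ r = aForm α₁ α₂ V u gx gy u gx gy }

/-- `sup { a(u,u) : u ∈ span(φ), ‖u‖_{L²(Ω)} = 1 }` for a finite family `φ` with
weak derivatives `φx, φy`. -/
def rayleighSup (α₁ α₂ : ℝ) (V : ℝ × ℝ → ℝ) {k : ℕ} (φ φx φy : Fin k → ℝ × ℝ → ℝ) : ℝ :=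
  sSup { s | ∃ c : Fin k → ℝ,
    (∫ p in Omega, (∑ i, c i * φ i p) ^ 2) = 1 ∧
    s = aForm α₁ α₂ V (fun p => ∑ i, c i * φ i p) (fun p => ∑ i, c i * φx i p)
      (fun p => ∑ i, c i * φy i p) (fun p => ∑ i, c i * φ i p)
      (fun p => ∑ i, c i * φx i p) (fun p => ∑ i, c i * φy i p) }

/-- The set of values `sup { a(u,u) : u ∈ E, ‖u‖ = 1 }` over `k`-dimensional
subspaces `E` of `H₀(Ω)` (represented by `L²(Ω)`-linearly independent families of
`k` elements of `H₀(Ω)`). -/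
def minmaxSet (α₁ α₂ : ℝ) (V : ℝ × ℝ → ℝ) (k : ℕ) : Set ℝ :=
  { r | ∃ φ φx φy : Fin k → ℝ × ℝ → ℝ,
      (∀ i, MemH0 α₁ α₂ V (φ i) (φx i) (φy i)) ∧
      (∀ c : Fin k → ℝ, (∀ᵐ p ∂(volume.restrict Omega), ∑ i, c i * φ i p = 0) → c = 0) ∧
      r = rayleighSup α₁ α₂ V φ φx φy }

/-- The `k`-th eigenvalue via the min-max principle. -/
def lamk (α₁ α₂ : ℝ) (V : ℝ × ℝ → ℝ) (k : ℕ) : ℝ := sInf (minmaxSet α₁ α₂ V k)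

/-- Membership in `U = (𝓗₀¹(Ω) ∩ L^{2q}(Ω)) \ {0}`. -/
def MemU (α₁ α₂ qe : ℝ) (u gx gy : ℝ × ℝ → ℝ) : Prop :=
  MemH10 α₁ α₂ u gx gy ∧
  MemLp u (ENNReal.ofReal (2 * qe)) (volume.restrict Omega) ∧
  ¬ (∀ᵐ p ∂(volume.restrict Omega), u p = 0)

/-- The functional `J(u) = (a₁(u,u) + M ‖u‖_{L^{2q}(Ω)}²) / ‖u‖_{L²(Ω)}²`. -/
def Jfun (α₁ α₂ M qe : ℝ) (u gx gy : ℝ × ℝ → ℝ) : ℝ :=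
  (a1Form α₁ α₂ u gx gy u gx gy +
    M * (∫ p in Omega, |u p| ^ (2 * qe)) ^ (1 / qe)) / (∫ p in Omega, (u p) ^ 2)

/-!
Put `X = ∫ |u ∂ₓu|` and `Y = ∫ |u ∂_y u|`. As `u` vanishes on the boundary,
`u(x, y)² ≤ 2 ∫ |u ∂_y u|(x, ·)` on vertical lines and symmetrically on horizontal ones, and
multiplying the two bounds gives `∫ u⁴ ≤ 4 X Y`. Since `y ^ (-2α₁)` is integrable for `α₁ < 1/2`,
Young's inequality `|ab| ≤ a² y^(-2α₁) / (4k) + k (y^α₁ b)²` with `k = (1 - 2α₁)⁻¹`, applied with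
`a = u` and the vertical bound for `a²`, gives `X ≤ Y / 2 + k ‖y^α₁ ∂ₓu‖²`; symmetrically for `Y`.
Hence the energy controls `X` and `Y`, and with them the `L⁴` norm; with `a = 1` the same inequality
controls the `L¹` norm of the gradient. By Poincaré's inequality on the cells of fine grids,
`L¹`-compactness then reduces to the convergence of countably many bounded cell integrals, and
Vitali's theorem with the `L⁴` bound upgrades it to `L^m` for `m < 4`.
-/

theorem exists_strictMono_cauchySeq_of_dist_le {X ι : Type*} [PseudoMetricSpace X] [Countable ι]
    {u : ℕ → X} {a : ℕ → ι → ℝ} {C : ι → ℝ} (ha : ∀ n i, |a n i| ≤ C i)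
    (h : ∀ ε > 0, ∃ s : Finset ι, ∀ n k, dist (u n) (u k) ≤ ∑ i ∈ s, |a n i - a k i| + ε) :
    ∃ σ : ℕ → ℕ, StrictMono σ ∧ CauchySeq (u ∘ σ) := by
  have ha_mem : ∀ n, a n ∈ univ.pi fun i => Icc (-C i) (C i) := fun n i _ => abs_le.1 (ha n i)
  obtain ⟨l, -, σ, hσ, hl⟩ := (isCompact_univ_pi fun _ => isCompact_Icc).isSeqCompact ha_mem
  refine ⟨σ, hσ, Metric.cauchySeq_iff'.2 fun ε hε => ?_⟩
  obtain ⟨s, hs⟩ := h (ε / 2) (half_pos hε)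
  have hsum : Tendsto (fun n => ∑ i ∈ s, |a (σ n) i - l i|) atTop (nhds 0) := by
    have hterm : ∀ i ∈ s, Tendsto (fun n => |a (σ n) i - l i|) atTop (nhds 0) := fun i _ =>
      tendsto_iff_dist_tendsto_zero.1 (tendsto_pi_nhds.1 hl i)
    simpa only [Finset.sum_const_zero] using tendsto_finsetSum s hterm
  obtain ⟨N, hN⟩ := eventually_atTop.1 (hsum.eventually_lt_const (show 0 < ε / 4 by positivity))
  refine ⟨N, fun n hn => ?_⟩
  have htri : ∑ i ∈ s, |a (σ n) i - a (σ N) i|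
      ≤ ∑ i ∈ s, |a (σ n) i - l i| + ∑ i ∈ s, |a (σ N) i - l i| := by
    rw [← Finset.sum_add_distrib]
    refine Finset.sum_le_sum fun i _ => ?_
    rw [abs_sub_comm (a (σ N) i)]
    exact abs_sub_le _ _ _
  calc dist (u (σ n)) (u (σ N)) ≤ ∑ i ∈ s, |a (σ n) i - a (σ N) i| + ε / 2 := hs _ _
    _ < ε := by linarith [hN n hn, hN N le_rfl]

section Vitali

open scoped ENNReal

variable {X E : Type*} [MeasurableSpace X] {μ : Measure X} [NormedAddCommGroup E]
  {p q : ℝ≥0∞}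

theorem eLpNorm_indicator_le_mul_rpow_measure {f : X → E} {s : Set X} (hs : MeasurableSet s)
    (hpq : p ≤ q) (hf : AEStronglyMeasurable f μ) :
    eLpNorm (s.indicator f) p μ ≤ eLpNorm f q μ * μ s ^ (1 / p.toReal - 1 / q.toReal) := by
  rw [eLpNorm_indicator_eq_eLpNorm_restrict hs]
  refine (eLpNorm_le_eLpNorm_mul_rpow_measure_univ hpq hf.restrict).trans ?_
  rw [Measure.restrict_apply_univ]
  gcongr
  exact Measure.restrict_le_self

theorem unifIntegrable_of_eLpNorm_le {ι : Type*} {f : ι → X → E} {C : ℝ≥0∞} (hp : p ≠ 0)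
    (hpq : p < q) (hq : q ≠ ∞) (hC : C ≠ ∞) (hf : ∀ i, AEStronglyMeasurable (f i) μ)
    (hfC : ∀ i, eLpNorm (f i) q μ ≤ C) : UnifIntegrable f p μ := by
  intro ε hε
  set r : ℝ := 1 / p.toReal - 1 / q.toReal
  have hr : 0 < r := sub_pos.2 <| one_div_lt_one_div_of_lt (ENNReal.toReal_pos hp hpq.ne_top)
    (ENNReal.toReal_strict_mono hq hpq)
  have hlim : Tendsto (fun δ : ℝ => C * ENNReal.ofReal δ ^ r) (nhds 0) (nhds 0) := by
    have hcont : Continuous fun δ : ℝ => C * ENNReal.ofReal δ ^ r :=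
      (ENNReal.continuous_const_mul hC).comp
        (ENNReal.continuous_rpow_const.comp ENNReal.continuous_ofReal)
    simpa [hr] using hcont.tendsto 0
  obtain ⟨δ, hδε, hδ⟩ := ((hlim.mono_left nhdsWithin_le_nhds).eventually_lt_const
    (ENNReal.ofReal_pos.2 hε) |>.and self_mem_nhdsWithin : ∀ᶠ δ in nhdsWithin (0 : ℝ) (Ioi 0),
      C * ENNReal.ofReal δ ^ r < ENNReal.ofReal ε ∧ δ ∈ Ioi 0).exists
  refine ⟨δ, hδ, fun i s hs hμs => ?_⟩
  calc eLpNorm (s.indicator (f i)) p μ ≤ eLpNorm (f i) q μ * μ s ^ r :=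
        eLpNorm_indicator_le_mul_rpow_measure hs hpq.le (hf i)
    _ ≤ C * ENNReal.ofReal δ ^ r := by gcongr; exact hfC i
    _ ≤ ENNReal.ofReal ε := hδε.le

theorem memLp_and_tendsto_eLpNorm_of_tendstoInMeasure [IsFiniteMeasure μ] {f : ℕ → X → E}
    {g : X → E} {C : ℝ≥0∞} (hp : 1 ≤ p) (hpq : p < q) (hq : q ≠ ∞) (hC : C ≠ ∞)
    (hf : ∀ n, AEStronglyMeasurable (f n) μ) (hfC : ∀ n, eLpNorm (f n) q μ ≤ C)
    (hg : AEStronglyMeasurable g μ) (hfg : TendstoInMeasure μ f atTop g) :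
    MemLp g p μ ∧ Tendsto (fun n => eLpNorm (f n - g) p μ) atTop (nhds 0) := by
  have hgp : MemLp g p μ := MemLp.mono_exponent
    ⟨hg, (eLpNorm_le_of_tendstoInMeasure (.of_forall hfC) hfg hf).trans_lt hC.lt_top⟩ hpq.le
  exact ⟨hgp, tendsto_Lp_finite_of_tendstoInMeasure hp hpq.ne_top hf hgp
    (unifIntegrable_of_eLpNorm_le (one_pos.trans_le hp).ne' hpq hq hC hf hfC) hfg⟩

theorem integral_norm_rpow_eq_toReal_eLpNorm_rpow {f : X → E} {m : ℝ} (hm : 0 < m)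
    (hf : AEStronglyMeasurable f μ) :
    ∫ x, ‖f x‖ ^ m ∂μ = (eLpNorm f (ENNReal.ofReal m) μ).toReal ^ m := by
  rw [toReal_eLpNorm hf, lpNorm_eq_integral_norm_rpow_toReal (by simpa using hm) (by simp) hf,
    ENNReal.toReal_ofReal hm.le, Real.rpow_inv_rpow (by positivity) hm.ne']

theorem eLpNorm_le_of_integral_norm_rpow_le {f : X → E} {m C : ℝ} (hm : 0 < m)
    (hf : MemLp f (ENNReal.ofReal m) μ) (hC : ∫ x, ‖f x‖ ^ m ∂μ ≤ C) :
    eLpNorm f (ENNReal.ofReal m) μ ≤ ENNReal.ofReal (C ^ m⁻¹) := by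
  rw [integral_norm_rpow_eq_toReal_eLpNorm_rpow hm hf.1] at hC
  rw [← ENNReal.ofReal_toReal hf.2.ne]
  gcongr
  exact (Real.le_rpow_inv_iff_of_pos ENNReal.toReal_nonneg
    ((Real.rpow_nonneg ENNReal.toReal_nonneg m).trans hC) hm).2 hC

theorem tendsto_integral_norm_rpow_of_tendsto_eLpNorm {ι : Type*} {l : Filter ι} {f : ι → X → E}
    {m : ℝ} (hm : 0 < m) (hf : ∀ i, AEStronglyMeasurable (f i) μ)
    (h : Tendsto (fun i => eLpNorm (f i) (ENNReal.ofReal m) μ) l (nhds 0)) :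
    Tendsto (fun i => ∫ x, ‖f i x‖ ^ m ∂μ) l (nhds 0) := by
  simp only [integral_norm_rpow_eq_toReal_eLpNorm_rpow hm (hf _)]
  simpa [hm.ne'] using
    ((ENNReal.tendsto_toReal ENNReal.zero_ne_top).comp h).rpow_const (Or.inr hm.le)

end Vitali

section PartialDerivatives

variable {u : ℝ × ℝ → ℝ}

theorem hasDerivAt_pdx (hu : Differentiable ℝ u) (x y : ℝ) :
    HasDerivAt (fun s => u (s, y)) (pdx u (x, y)) x :=
  (hu (x, y)).hasFDerivAt.comp_hasDerivAt x ((hasDerivAt_id x).prodMk (hasDerivAt_const x y))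

theorem hasDerivAt_pdy (hu : Differentiable ℝ u) (x y : ℝ) :
    HasDerivAt (fun s => u (x, s)) (pdy u (x, y)) y :=
  (hu (x, y)).hasFDerivAt.comp_hasDerivAt y ((hasDerivAt_const y x).prodMk (hasDerivAt_id y))

theorem continuous_pdx (hu : ContDiff ℝ 1 u) : Continuous (pdx u) :=
  (hu.continuous_fderiv one_ne_zero).clm_apply continuous_const

theorem continuous_pdy (hu : ContDiff ℝ 1 u) : Continuous (pdy u) :=
  (hu.continuous_fderiv one_ne_zero).clm_apply continuous_const

theorem pdx_sub {v : ℝ × ℝ → ℝ} (hu : Differentiable ℝ u) (hv : Differentiable ℝ v) :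
    pdx (u - v) = pdx u - pdx v := by
  ext p
  simp only [pdx, fderiv_sub (hu p) (hv p), Pi.sub_apply, sub_apply]

theorem pdy_sub {v : ℝ × ℝ → ℝ} (hu : Differentiable ℝ u) (hv : Differentiable ℝ v) :
    pdy (u - v) = pdy u - pdy v := by
  ext p
  simp only [pdy, fderiv_sub (hu p) (hv p), Pi.sub_apply, sub_apply]

theorem pdx_comp_swap (hu : Differentiable ℝ u) : pdx (u ∘ Prod.swap) = pdy u ∘ Prod.swap := by
  ext ⟨x, y⟩
  exact (hasDerivAt_pdx (hu.comp (differentiable_snd.prodMk differentiable_fst)) x y).unique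
    (hasDerivAt_pdy hu y x)

theorem pdy_comp_swap (hu : Differentiable ℝ u) : pdy (u ∘ Prod.swap) = pdx u ∘ Prod.swap := by
  ext ⟨x, y⟩
  exact (hasDerivAt_pdy (hu.comp (differentiable_snd.prodMk differentiable_fst)) x y).unique
    (hasDerivAt_pdx hu y x)

end PartialDerivatives

section Poincare

theorem setIntegral_abs_le_abs_setIntegral_add {X : Type*} [MeasurableSpace X] {μ : Measure X}
    {s : Set X} {f : X → ℝ} {K : ℝ} (hs : MeasurableSet s) (hμs : μ s ≠ ⊤)
    (hf : IntegrableOn f s μ) (hK : ∀ x ∈ s, ∀ y ∈ s, |f x - f y| ≤ K) :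
    ∫ x in s, |f x| ∂μ ≤ |∫ x in s, f x ∂μ| + μ.real s * K := by
  obtain rfl | ⟨x₀, hx₀⟩ := s.eq_empty_or_nonempty
  · simp
  have hK_nonneg : 0 ≤ μ.real s * K :=
    mul_nonneg measureReal_nonneg ((abs_nonneg _).trans (hK x₀ hx₀ x₀ hx₀))
  by_cases hpos : ∀ x ∈ s, 0 ≤ f x
  · rw [setIntegral_congr_fun hs fun x hx => abs_of_nonneg (hpos x hx)]
    linarith [le_abs_self (∫ x in s, f x ∂μ)]
  by_cases hneg : ∀ x ∈ s, f x ≤ 0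
  · rw [setIntegral_congr_fun hs fun x hx => abs_of_nonpos (hneg x hx), integral_neg]
    linarith [neg_le_abs (∫ x in s, f x ∂μ)]
  push Not at hpos hneg
  obtain ⟨⟨a, ha, hfa⟩, b, hb, hfb⟩ := And.intro hpos hneg
  have hbound : ∀ x ∈ s, |f x| ≤ K := fun x hx => abs_le'.2
    ⟨by linarith [le_abs_self (f x - f a), hK x hx a ha],
      by linarith [neg_le_abs (f x - f b), hK x hx b hb]⟩
  calc ∫ x in s, |f x| ∂μ ≤ ∫ _ in s, K ∂μ :=
        setIntegral_mono_on hf.abs (integrableOn_const hμs) hs hbound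
    _ = μ.real s * K := by rw [setIntegral_const, smul_eq_mul]
    _ ≤ |∫ x in s, f x ∂μ| + μ.real s * K := le_add_of_nonneg_left (abs_nonneg _)

theorem abs_sub_le_setIntegral_abs_deriv {f f' : ℝ → ℝ} {a b : ℝ}
    (hf : ∀ x, HasDerivAt f (f' x) x) (hf' : Continuous f') {s t : ℝ} (hs : s ∈ Icc a b)
    (ht : t ∈ Icc a b) : |f s - f t| ≤ ∫ x in Ioc a b, |f' x| := by
  rw [← intervalIntegral.integral_eq_sub_of_hasDerivAt (fun x _ => hf x)
    (hf'.intervalIntegrable t s)]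
  refine (intervalIntegral.norm_integral_le_integral_norm_uIoc (f := f')).trans ?_
  exact setIntegral_mono_set hf'.abs.integrableOn_Ioc (.of_forall fun _ => abs_nonneg _)
    (Ioc_subset_Ioc (le_min ht.1 hs.1) (max_le ht.2 hs.2)).eventuallyLE

theorem setIntegral_abs_le_of_hasDerivAt {f f' : ℝ → ℝ} {a b : ℝ} (hab : a ≤ b)
    (hf : ∀ x, HasDerivAt f (f' x) x) (hf' : Continuous f') :
    ∫ x in Ioc a b, |f x| ≤ |∫ x in Ioc a b, f x| + (b - a) * ∫ x in Ioc a b, |f' x| := by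
  have hfc : Continuous f := continuous_iff_continuousAt.2 fun x => (hf x).continuousAt
  rw [← Real.volume_real_Ioc_of_le hab]
  exact setIntegral_abs_le_abs_setIntegral_add measurableSet_Ioc measure_Ioc_lt_top.ne
    hfc.integrableOn_Ioc fun s hs t ht => abs_sub_le_setIntegral_abs_deriv hf hf'
      (Ioc_subset_Icc_self hs) (Ioc_subset_Icc_self ht)

theorem integrableOn_Ioc_prod_Ioc {w : ℝ × ℝ → ℝ} (hw : Continuous w) (a b c d : ℝ) :
    IntegrableOn w (Ioc a b ×ˢ Ioc c d) :=
  (hw.continuousOn.integrableOn_compact (isCompact_Icc.prod isCompact_Icc)).mono_set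
    (prod_mono Ioc_subset_Icc_self Ioc_subset_Icc_self)

theorem setIntegral_Ioc_prod_Ioc {w : ℝ × ℝ → ℝ} (hw : Continuous w) (a b c d : ℝ) :
    ∫ p in Ioc a b ×ˢ Ioc c d, w p = ∫ x in Ioc a b, ∫ y in Ioc c d, w (x, y) :=
  setIntegral_prod w (integrableOn_Ioc_prod_Ioc hw a b c d)

theorem setIntegral_Ioc_prod_Ioc_symm {w : ℝ × ℝ → ℝ} (hw : Continuous w) (a b c d : ℝ) :
    ∫ p in Ioc a b ×ˢ Ioc c d, w p = ∫ y in Ioc c d, ∫ x in Ioc a b, w (x, y) := by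
  rw [Measure.volume_eq_prod, ← setIntegral_prod_swap]
  exact setIntegral_Ioc_prod_Ioc (hw.comp continuous_swap) c d a b

theorem integrableOn_setIntegral_Ioc {w : ℝ × ℝ → ℝ} (hw : Continuous w) (a b c d : ℝ) :
    IntegrableOn (fun x => ∫ y in Ioc c d, w (x, y)) (Ioc a b) := by
  have hw_int := integrableOn_Ioc_prod_Ioc hw a b c d
  rw [IntegrableOn, Measure.volume_eq_prod, ← Measure.prod_restrict] at hw_int
  exact hw_int.integral_prod_left

theorem abs_sub_setIntegral_le_setIntegral_abs_pdx {w : ℝ × ℝ → ℝ} (hw : ContDiff ℝ 1 w)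
    {a b c d s t : ℝ} (hs : s ∈ Icc a b) (ht : t ∈ Icc a b) :
    |(∫ y in Ioc c d, w (s, y)) - ∫ y in Ioc c d, w (t, y)|
      ≤ ∫ p in Ioc a b ×ˢ Ioc c d, |pdx w p| := by
  have hwd := hw.differentiable one_ne_zero
  have hwx := continuous_pdx hw
  have hslice : ∀ x, IntegrableOn (fun y => w (x, y)) (Ioc c d) := fun x =>
    (hw.continuous.comp (.prodMk_right x)).integrableOn_Ioc
  calc |(∫ y in Ioc c d, w (s, y)) - ∫ y in Ioc c d, w (t, y)|
      ≤ ∫ y in Ioc c d, |w (s, y) - w (t, y)| := by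
        rw [← integral_sub (hslice s) (hslice t)]
        exact abs_integral_le_integral_abs
    _ ≤ ∫ y in Ioc c d, ∫ x in Ioc a b, |pdx w (x, y)| := by
        refine setIntegral_mono_on ((hslice s).sub (hslice t)).abs
          (integrableOn_setIntegral_Ioc (hwx.abs.comp continuous_swap) c d a b)
          measurableSet_Ioc fun y _ => ?_
        exact abs_sub_le_setIntegral_abs_deriv (fun x => hasDerivAt_pdx hwd x y)
          (hwx.comp (.prodMk_left y)) hs ht
    _ = ∫ p in Ioc a b ×ˢ Ioc c d, |pdx w p| :=
        (setIntegral_Ioc_prod_Ioc_symm hwx.abs a b c d).symm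

theorem setIntegral_abs_le_of_contDiff {w : ℝ × ℝ → ℝ} (hw : ContDiff ℝ 1 w) {a b c d : ℝ}
    (hab : a ≤ b) (hcd : c ≤ d) :
    ∫ p in Ioc a b ×ˢ Ioc c d, |w p| ≤ |∫ p in Ioc a b ×ˢ Ioc c d, w p|
      + (b - a) * (∫ p in Ioc a b ×ˢ Ioc c d, |pdx w p|)
      + (d - c) * ∫ p in Ioc a b ×ˢ Ioc c d, |pdy w p| := by
  have hwd := hw.differentiable one_ne_zero
  have hwy := continuous_pdy hw
  have hmean := integrableOn_setIntegral_Ioc hw.continuous a b c d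
  have hvert : ∫ p in Ioc a b ×ˢ Ioc c d, |w p| ≤ (∫ x in Ioc a b, |∫ y in Ioc c d, w (x, y)|)
      + (d - c) * ∫ p in Ioc a b ×ˢ Ioc c d, |pdy w p| := by
    have hwy_int := (integrableOn_setIntegral_Ioc hwy.abs a b c d).const_mul (d - c)
    rw [setIntegral_Ioc_prod_Ioc hw.continuous.abs, setIntegral_Ioc_prod_Ioc hwy.abs,
      ← integral_const_mul, ← integral_add hmean.abs hwy_int]
    exact setIntegral_mono_on (integrableOn_setIntegral_Ioc hw.continuous.abs a b c d)
      (hmean.abs.add hwy_int) measurableSet_Ioc fun x _ => setIntegral_abs_le_of_hasDerivAt hcd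
        (fun y => hasDerivAt_pdy hwd x y) (hwy.comp (.prodMk_right x))
  have hhoriz : ∫ x in Ioc a b, |∫ y in Ioc c d, w (x, y)| ≤ |∫ p in Ioc a b ×ˢ Ioc c d, w p|
      + (b - a) * ∫ p in Ioc a b ×ˢ Ioc c d, |pdx w p| := by
    rw [setIntegral_Ioc_prod_Ioc hw.continuous, ← Real.volume_real_Ioc_of_le hab]
    exact setIntegral_abs_le_abs_setIntegral_add measurableSet_Ioc measure_Ioc_lt_top.ne hmean
      fun s hs t ht => abs_sub_setIntegral_le_setIntegral_abs_pdx hw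
        (Ioc_subset_Icc_self hs) (Ioc_subset_Icc_self ht)
  linarith

end Poincare

section Rellich

/-- The half-open square of side `1 / N` with lower left corner `(q.1 / N, q.2 / N)`: the cell
with index `q` of the uniform `N × N` grid on the unit square. -/
def gridCell (N : ℕ) (q : Fin N × Fin N) : Set (ℝ × ℝ) :=
  Ioc ((q.1 : ℕ) / N : ℝ) ((q.1 + 1 : ℕ) / N) ×ˢ Ioc ((q.2 : ℕ) / N : ℝ) ((q.2 + 1 : ℕ) / N)

theorem measurableSet_gridCell (N : ℕ) (q : Fin N × Fin N) : MeasurableSet (gridCell N q) :=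
  measurableSet_Ioc.prod measurableSet_Ioc

theorem monotone_natCast_div (N : ℕ) : Monotone fun i : ℕ => (i / N : ℝ) := fun _ _ hij => by
  dsimp only
  gcongr

theorem iUnion_Ioc_natCast_div {N : ℕ} (hN : N ≠ 0) :
    ⋃ i : Fin N, Ioc ((i : ℕ) / N : ℝ) ((i + 1 : ℕ) / N) = Ioc 0 1 := by
  have h := (monotone_natCast_div N).biUnion_Ico_Ioc_map_succ 0 N
  simp only [Nat.cast_zero, zero_div, div_self (Nat.cast_ne_zero.2 hN : (N : ℝ) ≠ 0),
    Nat.succ_eq_succ] at h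
  rw [← h]
  ext x
  simp only [mem_iUnion, Fin.exists_iff, mem_Ico, zero_le, true_and, Nat.succ_eq_add_one]

theorem iUnion_gridCell {N : ℕ} (hN : N ≠ 0) : ⋃ q, gridCell N q = Ioc 0 1 ×ˢ Ioc 0 1 := by
  rw [← iUnion_Ioc_natCast_div hN, ← iUnion_prod]
  rfl

theorem pairwise_disjoint_gridCell (N : ℕ) : Pairwise (Function.onFun Disjoint (gridCell N)) := by
  have hdisj := (monotone_natCast_div N).pairwise_disjoint_on_Ioc_succ
  intro q r hqr
  rw [Function.onFun, gridCell, gridCell, Set.disjoint_prod]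
  by_cases h₁ : q.1 = r.1
  · exact .inr (hdisj fun h₂ => hqr (Prod.ext h₁ (Fin.ext h₂)))
  · exact .inl (hdisj fun h => h₁ (Fin.ext h))

theorem Omega_ae_eq_Ioc_prod_Ioc : Omega =ᵐ[volume] (Ioc 0 1 ×ˢ Ioc 0 1 : Set (ℝ × ℝ)) :=
  Measure.set_prod_ae_eq Ioo_ae_eq_Ioc Ioo_ae_eq_Ioc

theorem integrableOn_Omega {f : ℝ × ℝ → ℝ} (hf : Continuous f) : IntegrableOn f Omega :=
  (integrableOn_Ioc_prod_Ioc hf 0 1 0 1).congr_set_ae Omega_ae_eq_Ioc_prod_Ioc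

theorem setIntegral_Omega_eq_sum_gridCell {f : ℝ × ℝ → ℝ} (hf : Continuous f) {N : ℕ}
    (hN : N ≠ 0) : ∫ p in Omega, f p = ∑ q, ∫ p in gridCell N q, f p := by
  rw [setIntegral_congr_set Omega_ae_eq_Ioc_prod_Ioc, ← iUnion_gridCell hN]
  exact integral_iUnion_fintype (measurableSet_gridCell N) (pairwise_disjoint_gridCell N)
    fun _ => integrableOn_Ioc_prod_Ioc hf _ _ _ _

theorem abs_setIntegral_gridCell_le {f : ℝ × ℝ → ℝ} (hf : Continuous f) (N : ℕ)
    (q : Fin N × Fin N) : |∫ p in gridCell N q, f p| ≤ ∫ p in Omega, |f p| := by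
  have hN : N ≠ 0 := q.1.pos.ne'
  rw [setIntegral_Omega_eq_sum_gridCell hf.abs hN]
  exact abs_integral_le_integral_abs.trans <| Finset.single_le_sum
    (f := fun q => ∫ p in gridCell N q, |f p|)
    (fun _ _ => integral_nonneg fun _ => abs_nonneg _) (Finset.mem_univ q)

theorem setIntegral_gridCell_abs_le {w : ℝ × ℝ → ℝ} (hw : ContDiff ℝ 1 w) (N : ℕ)
    (q : Fin N × Fin N) : ∫ p in gridCell N q, |w p| ≤ |∫ p in gridCell N q, w p|
      + (1 / N : ℝ) * (∫ p in gridCell N q, |pdx w p|)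
      + (1 / N : ℝ) * ∫ p in gridCell N q, |pdy w p| := by
  have hside : ∀ i : ℕ, ((i + 1 : ℕ) / N : ℝ) - i / N = 1 / N := fun i => by push_cast; ring
  have h := setIntegral_abs_le_of_contDiff hw (monotone_natCast_div N q.1.val.le_succ)
    (monotone_natCast_div N q.2.val.le_succ)
  rwa [hside, hside] at h

theorem setIntegral_Omega_abs_le_sum_gridCell {w : ℝ × ℝ → ℝ} (hw : ContDiff ℝ 1 w) {N : ℕ}
    (hN : N ≠ 0) : ∫ p in Omega, |w p| ≤ (∑ q, |∫ p in gridCell N q, w p|)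
      + (1 / N : ℝ) * ((∫ p in Omega, |pdx w p|) + ∫ p in Omega, |pdy w p|) := by
  rw [setIntegral_Omega_eq_sum_gridCell hw.continuous.abs hN,
    setIntegral_Omega_eq_sum_gridCell (continuous_pdx hw).abs hN,
    setIntegral_Omega_eq_sum_gridCell (continuous_pdy hw).abs hN, mul_add, Finset.mul_sum,
    Finset.mul_sum, ← add_assoc, ← Finset.sum_add_distrib, ← Finset.sum_add_distrib]
  exact Finset.sum_le_sum fun q _ => setIntegral_gridCell_abs_le hw N q

theorem integral_abs_sub_le {X : Type*} [MeasurableSpace X] {μ : Measure X} {f g : X → ℝ} {C : ℝ}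
    (hf : Integrable f μ) (hg : Integrable g μ) (hfC : ∫ x, |f x| ∂μ ≤ C)
    (hgC : ∫ x, |g x| ∂μ ≤ C) : ∫ x, |(f - g) x| ∂μ ≤ C + C :=
  calc ∫ x, |(f - g) x| ∂μ ≤ ∫ x, (|f x| + |g x|) ∂μ :=
        integral_mono (hf.sub hg).abs (hf.abs.add hg.abs) fun x => abs_sub (f x) (g x)
    _ = (∫ x, |f x| ∂μ) + ∫ x, |g x| ∂μ := integral_add hf.abs hg.abs
    _ ≤ C + C := add_le_add hfC hgC

variable {u : ℕ → ℝ × ℝ → ℝ} {C : ℝ}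

theorem exists_setIntegral_abs_sub_le_sum_gridCell (hu : ∀ n, ContDiff ℝ 1 (u n))
    (hux : ∀ n, ∫ p in Omega, |pdx (u n) p| ≤ C) (huy : ∀ n, ∫ p in Omega, |pdy (u n) p| ≤ C)
    {ε : ℝ} (hε : 0 < ε) : ∃ N : ℕ, ∀ n k, ∫ p in Omega, |u n p - u k p| ≤
      (∑ q, |(∫ p in gridCell N q, u n p) - ∫ p in gridCell N q, u k p|) + ε := by
  obtain ⟨N, hN⟩ := exists_nat_gt (4 * C / ε)
  have hC : 0 ≤ C := (integral_nonneg fun _ => abs_nonneg _).trans (hux 0)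
  have hN_pos : (0 : ℝ) < N := (by positivity : 0 ≤ 4 * C / ε).trans_lt hN
  refine ⟨N, fun n k => ?_⟩
  have hpx : ∫ p in Omega, |pdx (u n - u k) p| ≤ C + C := by
    rw [pdx_sub ((hu n).differentiable one_ne_zero) ((hu k).differentiable one_ne_zero)]
    exact integral_abs_sub_le (integrableOn_Omega (continuous_pdx (hu n)))
      (integrableOn_Omega (continuous_pdx (hu k))) (hux n) (hux k)
  have hpy : ∫ p in Omega, |pdy (u n - u k) p| ≤ C + C := by
    rw [pdy_sub ((hu n).differentiable one_ne_zero) ((hu k).differentiable one_ne_zero)]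
    exact integral_abs_sub_le (integrableOn_Omega (continuous_pdy (hu n)))
      (integrableOn_Omega (continuous_pdy (hu k))) (huy n) (huy k)
  have hcell : ∀ q, ∫ p in gridCell N q, (u n - u k) p
      = (∫ p in gridCell N q, u n p) - ∫ p in gridCell N q, u k p := fun q =>
    integral_sub (integrableOn_Ioc_prod_Ioc (hu n).continuous _ _ _ _)
      (integrableOn_Ioc_prod_Ioc (hu k).continuous _ _ _ _)
  have hgrad : (1 / N : ℝ) * ((∫ p in Omega, |pdx (u n - u k) p|)
      + ∫ p in Omega, |pdy (u n - u k) p|) ≤ ε := by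
    rw [div_lt_iff₀ hε] at hN
    rw [one_div_mul_eq_div, div_le_iff₀ hN_pos]
    linarith
  have hsub : ContDiff ℝ 1 (u n - u k) := (hu n).sub (hu k)
  have h := setIntegral_Omega_abs_le_sum_gridCell hsub (Nat.cast_pos.1 hN_pos).ne'
  simp only [hcell] at h
  exact h.trans (add_le_add_right hgrad _)

theorem exists_subseq_tendsto_eLpNorm_one (hu : ∀ n, ContDiff ℝ 1 (u n))
    (hu₀ : ∀ n, ∫ p in Omega, |u n p| ≤ C) (hux : ∀ n, ∫ p in Omega, |pdx (u n) p| ≤ C)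
    (huy : ∀ n, ∫ p in Omega, |pdy (u n) p| ≤ C) :
    ∃ σ : ℕ → ℕ, StrictMono σ ∧ ∃ v : ℝ × ℝ → ℝ, MemLp v 1 (volume.restrict Omega) ∧
      Tendsto (fun n => eLpNorm (u (σ n) - v) 1 (volume.restrict Omega)) atTop (nhds 0) := by
  have hint : ∀ n, Integrable (u n) (volume.restrict Omega) := fun n =>
    integrableOn_Omega (hu n).continuous
  let U : ℕ → Lp ℝ 1 (volume.restrict Omega) := fun n => (hint n).toL1 (u n)
  have hdist : ∀ n k, dist (U n) (U k) = ∫ p in Omega, |u n p - u k p| := fun n k => by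
    rw [dist_eq_norm, ← Integrable.toL1_sub, L1.norm_of_fun_eq_integral_norm]
    rfl
  obtain ⟨σ, hσ, hcauchy⟩ := exists_strictMono_cauchySeq_of_dist_le (u := U)
    (a := fun n (i : Σ N, Fin N × Fin N) => ∫ p in gridCell i.1 i.2, u n p)
    (fun n i => (abs_setIntegral_gridCell_le (hu n).continuous i.1 i.2).trans (hu₀ n))
    fun ε hε => by
      obtain ⟨N, hN⟩ := exists_setIntegral_abs_sub_le_sum_gridCell hu hux huy hε
      refine ⟨Finset.univ.map (.sigmaMk N), fun n k => ?_⟩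
      rw [hdist, Finset.sum_map]
      exact hN n k
  obtain ⟨V, hV⟩ := cauchySeq_tendsto_of_complete hcauchy
  refine ⟨σ, hσ, V, Lp.memLp V, ?_⟩
  have hlim := Lp.tendsto_Lp_iff_tendsto_eLpNorm'' (fi := atTop) (fun n => u (σ n))
    (fun n => memLp_one_iff_integrable.2 (hint (σ n))) V (Lp.memLp V)
  rw [Lp.toLp_coeFn] at hlim
  exact hlim.1 hV

end Rellich

section WeightedYoung

theorem abs_mul_le_sq_mul_inv_sq_add {k w : ℝ} (hk : 0 < k) (hw : w ≠ 0) (a b : ℝ) :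
    |a * b| ≤ a ^ 2 * (w ^ 2)⁻¹ / (4 * k) + k * (w * b) ^ 2 := by
  have hyoung := two_mul_le_add_mul_sq (a := |w * b|) (b := |a / w|) (mul_pos two_pos hk)
  have hprod : |w * b| * |a / w| = |a * b| := by
    rw [← abs_mul]
    congr 1
    field_simp
  rw [mul_assoc, hprod, sq_abs, sq_abs, div_pow] at hyoung
  have hconst : (2 * k)⁻¹ * (a ^ 2 / w ^ 2) = 2 * (a ^ 2 * (w ^ 2)⁻¹ / (4 * k)) := by
    field_simp
    ring
  linarith

theorem integral_abs_mul_le_of_sq_le {X Y : Type*} [MeasurableSpace X] [MeasurableSpace Y]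
    {μ : Measure X} {ν : Measure Y} [SFinite μ] [SFinite ν] {a b : X × Y → ℝ} {G : X → ℝ}
    {w : Y → ℝ} {k : ℝ} (hk : 0 < k) (hwk : ∫ y, (w y ^ 2)⁻¹ ∂ν = k) (hG : Integrable G μ)
    (hw : ∀ᵐ p ∂μ.prod ν, w p.2 ≠ 0) (ha : ∀ᵐ p ∂μ.prod ν, a p ^ 2 ≤ G p.1)
    (hb : Integrable (fun p => (w p.2 * b p) ^ 2) (μ.prod ν)) :
    ∫ p, |a p * b p| ∂μ.prod ν
      ≤ (∫ x, G x ∂μ) / 4 + k * ∫ p, (w p.2 * b p) ^ 2 ∂μ.prod ν := by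
  have hw_int : Integrable (fun y => (w y ^ 2)⁻¹) ν :=
    .of_integral_ne_zero (hwk.trans_ne hk.ne')
  have hGw_int := (hG.mul_prod hw_int).div_const (4 * k)
  have hGw : ∫ p, G p.1 * (w p.2 ^ 2)⁻¹ / (4 * k) ∂μ.prod ν = (∫ x, G x ∂μ) / 4 := by
    rw [integral_div, integral_prod_mul G (fun y => (w y ^ 2)⁻¹), hwk]
    field_simp
  rw [← hGw, ← integral_const_mul, ← integral_add hGw_int (hb.const_mul k)]
  refine integral_mono_of_nonneg (.of_forall fun _ => abs_nonneg _)
    (hGw_int.add (hb.const_mul k)) ?_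
  filter_upwards [hw, ha] with p hwp hap
  refine (abs_mul_le_sq_mul_inv_sq_add hk hwp (a p) (b p)).trans ?_
  gcongr

theorem setIntegral_Ioo_inv_sq_rpow {α : ℝ} (hα : α < 1 / 2) :
    ∫ y in Ioo (0 : ℝ) 1, ((y ^ α) ^ 2)⁻¹ = (1 - 2 * α)⁻¹ := by
  have hpow : ∀ y ∈ Ioo (0 : ℝ) 1, ((y ^ α) ^ 2)⁻¹ = y ^ (-(2 * α)) := fun y hy => by
    rw [Real.rpow_neg hy.1.le, mul_comm, Real.rpow_mul hy.1.le, Real.rpow_two]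
  rw [setIntegral_congr_fun measurableSet_Ioo hpow, ← integral_Ioc_eq_integral_Ioo,
    ← intervalIntegral.integral_of_le zero_le_one, integral_rpow (.inl (by linarith)),
    Real.one_rpow, Real.zero_rpow (by linarith), sub_zero, one_div, neg_add_eq_sub]

theorem measurableSet_Omega : MeasurableSet Omega := measurableSet_Ioo.prod measurableSet_Ioo

theorem restrict_Omega : volume.restrict Omega
    = (volume.restrict (Ioo (0 : ℝ) 1)).prod (volume.restrict (Ioo (0 : ℝ) 1)) :=
  (Measure.prod_restrict _ _).symm

theorem setIntegral_Omega_abs_mul_le {a b : ℝ × ℝ → ℝ} {G : ℝ → ℝ} {α : ℝ} (hα : α < 1 / 2)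
    (hG : IntegrableOn G (Ioo 0 1)) (ha : ∀ p ∈ Omega, a p ^ 2 ≤ G p.1)
    (hb : IntegrableOn (fun p => (p.2 ^ α * b p) ^ 2) Omega) :
    ∫ p in Omega, |a p * b p| ≤ (∫ x in Ioo 0 1, G x) / 4
      + (1 - 2 * α)⁻¹ * ∫ p in Omega, (p.2 ^ α * b p) ^ 2 := by
  have hw : ∀ᵐ p ∂volume.restrict Omega, p.2 ^ α ≠ 0 :=
    ae_restrict_of_forall_mem measurableSet_Omega fun p hp => (Real.rpow_pos_of_pos hp.2.1 α).ne'
  have ha' := ae_restrict_of_forall_mem (μ := volume) measurableSet_Omega ha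
  rw [IntegrableOn] at hb
  rw [restrict_Omega] at hw ha' hb ⊢
  exact integral_abs_mul_le_of_sq_le (w := (· ^ α)) (inv_pos.2 (by linarith))
    (setIntegral_Ioo_inv_sq_rpow hα) hG hw ha' hb

theorem setIntegral_Omega_abs_le {b : ℝ × ℝ → ℝ} {α : ℝ} (hα : α < 1 / 2)
    (hb : IntegrableOn (fun p => (p.2 ^ α * b p) ^ 2) Omega) :
    ∫ p in Omega, |b p| ≤ 1 / 4 + (1 - 2 * α)⁻¹ * ∫ p in Omega, (p.2 ^ α * b p) ^ 2 := by
  simpa using setIntegral_Omega_abs_mul_le (a := 1) (G := 1) hα (integrableOn_const (by simp))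
    (by simp) hb

end WeightedYoung

section APriori

theorem isOpen_Omega : IsOpen Omega := isOpen_Ioo.prod isOpen_Ioo

theorem isBounded_Omega : Bornology.IsBounded Omega :=
  (Metric.isBounded_Ioo 0 1).prod (Metric.isBounded_Ioo 0 1)

variable {u : ℝ × ℝ → ℝ} {α : ℝ}

theorem contDiff_comp_swap (hu : ContDiff ℝ 1 u) : ContDiff ℝ 1 (u ∘ Prod.swap) :=
  hu.comp (contDiff_snd.prodMk contDiff_fst)

theorem tsupport_comp_swap_subset_Omega (hsupp : tsupport u ⊆ Omega) :
    tsupport (u ∘ Prod.swap) ⊆ Omega := by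
  rw [show u ∘ Prod.swap = u ∘ Homeomorph.prodComm ℝ ℝ from rfl, tsupport_comp_eq_preimage]
  exact fun p hp => (hsupp hp).symm

theorem setIntegral_Omega_comp_swap (f : ℝ × ℝ → ℝ) :
    ∫ p in Omega, f p.swap = ∫ p in Omega, f p := by
  rw [restrict_Omega, integral_prod_swap]

theorem integrableOn_Omega_sq_rpow_mul_pdx (hu : ContDiff ℝ 1 u) (hsupp : tsupport u ⊆ Omega) :
    IntegrableOn (fun p => (p.2 ^ α * pdx u p) ^ 2) Omega := by
  have hpow : ContinuousOn (fun p : ℝ × ℝ => p.2 ^ α) Omega :=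
    continuousOn_snd.rpow_const fun p hp => .inl hp.2.1.ne'
  have hsupp_pdx : tsupport (fun p : ℝ × ℝ => p.2 ^ α * pdx u p) ⊆ Omega :=
    (tsupport_mul_subset_right.trans (tsupport_fderiv_apply_subset ℝ (1, 0))).trans hsupp
  have hcont := (hpow.mul (continuous_pdx hu).continuousOn).continuous_of_tsupport_subset
    isOpen_Omega hsupp_pdx
  exact integrableOn_Omega (hcont.pow 2)

theorem integrableOn_Ioo_two_mul_setIntegral {f : ℝ × ℝ → ℝ} (hf : Continuous f) :
    IntegrableOn (fun x => 2 * ∫ y in Ioo 0 1, f (x, y)) (Ioo 0 1) := by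
  have hf_int := integrableOn_Omega hf
  rw [IntegrableOn, restrict_Omega] at hf_int
  exact hf_int.integral_prod_left.const_mul 2

theorem setIntegral_Ioo_two_mul_setIntegral {f : ℝ × ℝ → ℝ} (hf : Continuous f) :
    ∫ x in Ioo 0 1, 2 * ∫ y in Ioo 0 1, f (x, y) = 2 * ∫ p in Omega, f p := by
  have hf_int := integrableOn_Omega hf
  rw [IntegrableOn, restrict_Omega] at hf_int
  rw [integral_const_mul, restrict_Omega, integral_prod f hf_int]

theorem sq_le_two_mul_setIntegral_abs_mul_pdy (hu : ContDiff ℝ 1 u) (hsupp : tsupport u ⊆ Omega)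
    {p : ℝ × ℝ} (hp : p ∈ Omega) :
    u p ^ 2 ≤ 2 * ∫ y in Ioo 0 1, |u (p.1, y) * pdy u (p.1, y)| := by
  have hbdry : u (p.1, 0) = 0 :=
    image_eq_zero_of_notMem_tsupport fun h => (hsupp h).2.1.false
  have hderiv : ∀ y, HasDerivAt (fun s => u (p.1, s) ^ 2) (2 * (u (p.1, y) * pdy u (p.1, y))) y :=
    fun y => by
      simpa [mul_assoc] using (hasDerivAt_pdy (hu.differentiable one_ne_zero) p.1 y).fun_pow 2
  have hcont : Continuous fun y => 2 * (u (p.1, y) * pdy u (p.1, y)) :=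
    ((hu.continuous.mul (continuous_pdy hu)).comp (.prodMk_right p.1)).const_mul 2
  have h := abs_sub_le_setIntegral_abs_deriv hderiv hcont (Ioo_subset_Icc_self hp.2)
    (left_mem_Icc.2 zero_le_one)
  simpa [hbdry, abs_mul, integral_const_mul, integral_Ioc_eq_integral_Ioo] using h

theorem setIntegral_abs_mul_pdx_le (hα : α < 1 / 2) (hu : ContDiff ℝ 1 u)
    (hsupp : tsupport u ⊆ Omega) : ∫ p in Omega, |u p * pdx u p| ≤
      (∫ p in Omega, |u p * pdy u p|) / 2
        + (1 - 2 * α)⁻¹ * ∫ p in Omega, (p.2 ^ α * pdx u p) ^ 2 := by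
  have hcont : Continuous fun p => |u p * pdy u p| := (hu.continuous.mul (continuous_pdy hu)).abs
  have h := setIntegral_Omega_abs_mul_le hα (integrableOn_Ioo_two_mul_setIntegral hcont)
    (fun p hp => sq_le_two_mul_setIntegral_abs_mul_pdy hu hsupp hp)
    (integrableOn_Omega_sq_rpow_mul_pdx hu hsupp)
  rw [setIntegral_Ioo_two_mul_setIntegral hcont] at h
  linarith

theorem setIntegral_abs_pdx_le (hα : α < 1 / 2) (hu : ContDiff ℝ 1 u)
    (hsupp : tsupport u ⊆ Omega) : ∫ p in Omega, |pdx u p| ≤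
      1 / 4 + (1 - 2 * α)⁻¹ * ∫ p in Omega, (p.2 ^ α * pdx u p) ^ 2 :=
  setIntegral_Omega_abs_le hα (integrableOn_Omega_sq_rpow_mul_pdx hu hsupp)

theorem sq_le_two_mul_setIntegral_abs_mul_pdx (hu : ContDiff ℝ 1 u) (hsupp : tsupport u ⊆ Omega)
    {p : ℝ × ℝ} (hp : p ∈ Omega) :
    u p ^ 2 ≤ 2 * ∫ x in Ioo 0 1, |u (x, p.2) * pdx u (x, p.2)| := by
  have h := sq_le_two_mul_setIntegral_abs_mul_pdy (contDiff_comp_swap hu)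
    (tsupport_comp_swap_subset_Omega hsupp) (p := p.swap) hp.symm
  rwa [pdy_comp_swap (hu.differentiable one_ne_zero)] at h

theorem setIntegral_abs_mul_pdy_le (hα : α < 1 / 2) (hu : ContDiff ℝ 1 u)
    (hsupp : tsupport u ⊆ Omega) : ∫ p in Omega, |u p * pdy u p| ≤
      (∫ p in Omega, |u p * pdx u p|) / 2
        + (1 - 2 * α)⁻¹ * ∫ p in Omega, (p.1 ^ α * pdy u p) ^ 2 := by
  have hud := hu.differentiable one_ne_zero
  have h := setIntegral_abs_mul_pdx_le hα (contDiff_comp_swap hu)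
    (tsupport_comp_swap_subset_Omega hsupp)
  rw [pdx_comp_swap hud, pdy_comp_swap hud] at h
  rwa [← setIntegral_Omega_comp_swap, ← setIntegral_Omega_comp_swap fun p => |u p * pdx u p|,
    ← setIntegral_Omega_comp_swap fun p => (p.1 ^ α * pdy u p) ^ 2]

theorem setIntegral_abs_pdy_le (hα : α < 1 / 2) (hu : ContDiff ℝ 1 u)
    (hsupp : tsupport u ⊆ Omega) : ∫ p in Omega, |pdy u p| ≤
      1 / 4 + (1 - 2 * α)⁻¹ * ∫ p in Omega, (p.1 ^ α * pdy u p) ^ 2 := by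
  have h := setIntegral_abs_pdx_le hα (contDiff_comp_swap hu)
    (tsupport_comp_swap_subset_Omega hsupp)
  rw [pdx_comp_swap (hu.differentiable one_ne_zero)] at h
  rwa [← setIntegral_Omega_comp_swap, ← setIntegral_Omega_comp_swap fun p => (p.1 ^ α * _) ^ 2]

theorem setIntegral_pow_four_le (hu : ContDiff ℝ 1 u) (hsupp : tsupport u ⊆ Omega) :
    ∫ p in Omega, u p ^ 4 ≤
      (2 * ∫ p in Omega, |u p * pdy u p|) * (2 * ∫ p in Omega, |u p * pdx u p|) := by
  have hx : Continuous fun p => |u p * pdx u p| := (hu.continuous.mul (continuous_pdx hu)).abs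
  have hy : Continuous fun p => |u p * pdy u p| := (hu.continuous.mul (continuous_pdy hu)).abs
  have hx_swap : Continuous fun p : ℝ × ℝ => |u p.swap * pdx u p.swap| := hx.comp continuous_swap
  have hbound := (integrableOn_Ioo_two_mul_setIntegral hy).mul_prod
    (integrableOn_Ioo_two_mul_setIntegral hx_swap)
  rw [← setIntegral_Ioo_two_mul_setIntegral hy, ← setIntegral_Omega_comp_swap fun p => |u p * _|,
    ← setIntegral_Ioo_two_mul_setIntegral hx_swap, ← integral_prod_mul]
  rw [← restrict_Omega] at hbound ⊢
  refine setIntegral_mono_on (integrableOn_Omega (hu.continuous.pow 4)) hbound measurableSet_Omega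
    fun p hp => ?_
  calc u p ^ 4 = u p ^ 2 * u p ^ 2 := by ring
    _ ≤ _ := mul_le_mul (sq_le_two_mul_setIntegral_abs_mul_pdy hu hsupp hp)
      (sq_le_two_mul_setIntegral_abs_mul_pdx hu hsupp hp) (sq_nonneg _) (by positivity)

theorem setIntegral_pow_four_le_of_weighted {α₁ α₂ M : ℝ} (hα₁ : α₁ < 1 / 2) (hα₂ : α₂ < 1 / 2)
    (hu : ContDiff ℝ 1 u) (hsupp : tsupport u ⊆ Omega)
    (hx : (1 - 2 * α₁)⁻¹ * ∫ p in Omega, (p.2 ^ α₁ * pdx u p) ^ 2 ≤ M)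
    (hy : (1 - 2 * α₂)⁻¹ * ∫ p in Omega, (p.1 ^ α₂ * pdy u p) ^ 2 ≤ M) :
    ∫ p in Omega, u p ^ 4 ≤ (4 * M) ^ 2 := by
  have hX := setIntegral_abs_mul_pdx_le hα₁ hu hsupp
  have hY := setIntegral_abs_mul_pdy_le hα₂ hu hsupp
  have hX₀ : 0 ≤ ∫ p in Omega, |u p * pdx u p| := integral_nonneg fun _ => abs_nonneg _
  refine (setIntegral_pow_four_le hu hsupp).trans ?_
  rw [sq (4 * M)]
  exact mul_le_mul (by linarith) (by linarith) (by linarith) (by linarith)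

theorem setIntegral_sq_le_of_H1Norm_le {α₁ α₂ B : ℝ} {gx gy : ℝ × ℝ → ℝ}
    (h : H1Norm α₁ α₂ u gx gy ≤ B) : (∫ p in Omega, u p ^ 2) ≤ B ^ 2 ∧
      (∫ p in Omega, (p.2 ^ α₁ * gx p) ^ 2) ≤ B ^ 2 ∧
      ∫ p in Omega, (p.1 ^ α₂ * gy p) ^ 2 ≤ B ^ 2 := by
  have hsum := (Real.sqrt_le_iff.1 h).2
  have hu : 0 ≤ ∫ p in Omega, u p ^ 2 := integral_nonneg fun _ => sq_nonneg _
  have hx : 0 ≤ ∫ p in Omega, (p.2 ^ α₁ * gx p) ^ 2 := integral_nonneg fun _ => sq_nonneg _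
  have hy : 0 ≤ ∫ p in Omega, (p.1 ^ α₂ * gy p) ^ 2 := integral_nonneg fun _ => sq_nonneg _
  refine ⟨?_, ?_, ?_⟩ <;> linarith

theorem exists_forall_setIntegral_le_of_H1Norm_le {α₁ α₂ : ℝ} (hα₁ : α₁ < 1 / 2)
    (hα₂ : α₂ < 1 / 2) (B : ℝ) : ∃ C : ℝ, ∀ u : ℝ × ℝ → ℝ, ContDiff ℝ 1 u → tsupport u ⊆ Omega →
      H1Norm α₁ α₂ u (pdx u) (pdy u) ≤ B →
        (∫ p in Omega, |u p|) ≤ C ∧ (∫ p in Omega, |pdx u p|) ≤ C ∧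
          (∫ p in Omega, |pdy u p|) ≤ C ∧ ∫ p in Omega, u p ^ 4 ≤ C := by
  set k₁ := (1 - 2 * α₁)⁻¹
  set k₂ := (1 - 2 * α₂)⁻¹
  have hk₁ : 0 ≤ k₁ := inv_nonneg.2 (by linarith)
  have hk₂ : 0 ≤ k₂ := inv_nonneg.2 (by linarith)
  set M := (1 + k₁ + k₂) * B ^ 2
  refine ⟨1 / 4 + M + (4 * M) ^ 2, fun u hu hsupp hB => ?_⟩
  obtain ⟨hB₀, hBx, hBy⟩ := setIntegral_sq_le_of_H1Norm_le hB
  have hM₀ : B ^ 2 ≤ M := le_mul_of_one_le_left (sq_nonneg B) (by linarith)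
  have hMx : k₁ * ∫ p in Omega, (p.2 ^ α₁ * pdx u p) ^ 2 ≤ M :=
    mul_le_mul (by linarith) hBx (integral_nonneg fun _ => sq_nonneg _) (by linarith)
  have hMy : k₂ * ∫ p in Omega, (p.1 ^ α₂ * pdy u p) ^ 2 ≤ M :=
    mul_le_mul (by linarith) hBy (integral_nonneg fun _ => sq_nonneg _) (by linarith)
  have hu_sq : IntegrableOn (fun p => u p ^ 2) Omega := integrableOn_Omega (hu.continuous.pow 2)
  have hu₁ : ∫ p in Omega, |u p| ≤ 1 / 4 + ∫ p in Omega, u p ^ 2 := by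
    simpa using setIntegral_Omega_abs_le (α := 0) (b := u) (by norm_num) (by simpa using hu_sq)
  have hux := setIntegral_abs_pdx_le hα₁ hu hsupp
  have huy := setIntegral_abs_pdy_le hα₂ hu hsupp
  have hu₄ := setIntegral_pow_four_le_of_weighted hα₁ hα₂ hu hsupp hMx hMy
  have hM_sq := sq_nonneg (4 * M)
  exact ⟨by linarith, by linarith, by linarith, by linarith [sq_nonneg B]⟩

theorem memLp_of_tsupport_subset_Omega (hu : Continuous u) (hsupp : tsupport u ⊆ Omega)
    (q : ENNReal) : MemLp u q (volume.restrict Omega) :=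
  have hcpt : HasCompactSupport u :=
    Metric.isCompact_of_isClosed_isBounded (isClosed_tsupport u) (isBounded_Omega.subset hsupp)
  (hu.memLp_of_hasCompactSupport hcpt).restrict Omega

theorem eLpNorm_four_le_of_setIntegral_le {C : ℝ} (hu : Continuous u) (hsupp : tsupport u ⊆ Omega)
    (hC : ∫ p in Omega, u p ^ 4 ≤ C) : eLpNorm u (ENNReal.ofReal 4) (volume.restrict Omega)
      ≤ ENNReal.ofReal (C ^ (4⁻¹ : ℝ)) := by
  refine eLpNorm_le_of_integral_norm_rpow_le four_pos
    (memLp_of_tsupport_subset_Omega hu hsupp _) ?_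
  simpa [Real.norm_eq_abs, Even.pow_abs (by decide : Even 4)] using hC

end APriori

theorem compact_embedding_Lm_general (α₁ α₂ m : ℝ) (hα₁ : α₁ < 1 / 2) (hα₂ : α₂ < 1 / 2)
    (hm₁ : 1 ≤ m) (hm₂ : m < 4) (u : ℕ → ℝ × ℝ → ℝ) (hu : ∀ n, ContDiff ℝ 1 (u n))
    (hsupp : ∀ n, tsupport (u n) ⊆ Omega)
    (hbdd : ∃ B : ℝ, ∀ n, H1Norm α₁ α₂ (u n) (pdx (u n)) (pdy (u n)) ≤ B) :
    ∃ σ : ℕ → ℕ, StrictMono σ ∧ ∃ v : ℝ × ℝ → ℝ,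
      MemLp v (ENNReal.ofReal m) (volume.restrict Omega) ∧
      Tendsto (fun n => ∫ p in Omega, |u (σ n) p - v p| ^ m) atTop (nhds 0) := by
  obtain ⟨B, hB⟩ := hbdd
  obtain ⟨C, hC⟩ := exists_forall_setIntegral_le_of_H1Norm_le hα₁ hα₂ B
  have hbound := fun n => hC (u n) (hu n) (hsupp n) (hB n)
  obtain ⟨σ, hσ, v, hv, hlim⟩ := exists_subseq_tendsto_eLpNorm_one hu (fun n => (hbound n).1)
    (fun n => (hbound n).2.1) fun n => (hbound n).2.2.1
  have hmeas : ∀ n, AEStronglyMeasurable (u (σ n)) (volume.restrict Omega) := fun n =>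
    (hu (σ n)).continuous.aestronglyMeasurable
  have hfour : ∀ n, eLpNorm (u (σ n)) (ENNReal.ofReal 4) (volume.restrict Omega)
      ≤ ENNReal.ofReal (C ^ (4⁻¹ : ℝ)) := fun n =>
    eLpNorm_four_le_of_setIntegral_le (hu _).continuous (hsupp _) (hbound _).2.2.2
  have : IsFiniteMeasure (volume.restrict Omega) :=
    isFiniteMeasure_restrict.2 isBounded_Omega.measure_lt_top.ne
  obtain ⟨hvm, hlim_m⟩ := memLp_and_tendsto_eLpNorm_of_tendstoInMeasure
    (ENNReal.one_le_ofReal.2 hm₁) (ENNReal.ofReal_lt_ofReal_iff four_pos |>.2 hm₂)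
    ENNReal.ofReal_ne_top ENNReal.ofReal_ne_top hmeas hfour hv.1
    (tendstoInMeasure_of_tendsto_eLpNorm one_ne_zero hmeas hv.1 hlim)
  have hlim_int := tendsto_integral_norm_rpow_of_tendsto_eLpNorm (one_pos.trans_le hm₁)
    (fun n => (hmeas n).sub hv.1) hlim_m
  exact ⟨σ, hσ, v, hvm, hlim_int⟩

/-- Compact embedding of `𝓗₀¹(Ω)` into `L^m(Ω)` for `1 ≤ m < 4`:
every sequence of test functions bounded in the `𝓗¹` norm has a subsequence
converging in `L^m(Ω)`. -/
theorem compact_embedding_Lm (α₁ α₂ m : ℝ)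
    (hα₁ : α₁ ∈ Ioo (0:ℝ) (1/2)) (hα₂ : α₂ ∈ Ioo (0:ℝ) (1/2))
    (hm₁ : 1 ≤ m) (hm₂ : m < 4)
    (u : ℕ → ℝ × ℝ → ℝ) (hu : ∀ n, IsTest (u n))
    (hbdd : ∃ B : ℝ, ∀ n, H1Norm α₁ α₂ (u n) (pdx (u n)) (pdy (u n)) ≤ B) :
    ∃ σ : ℕ → ℕ, StrictMono σ ∧ ∃ v : ℝ × ℝ → ℝ,
      MemLp v (ENNReal.ofReal m) (volume.restrict Omega) ∧
      Tendsto (fun n => ∫ p in Omega, |u (σ n) p - v p| ^ m) atTop (nhds 0) :=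
  compact_embedding_Lm_general α₁ α₂ m hα₁.2 hα₂.2 hm₁ hm₂ u
    (fun n => (hu n).1.of_le (mod_cast le_top)) (fun n => (hu n).2.2) hbdd
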